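/- arXiv:2510.25576 — 3 statements merged into one kernel-verified Lean document; each statement's English description precedes it below -/
import Mathlib

section
/- Let x₀ > 0 and L > 0, and suppose γ = (x,y) : [0,2L] → ℝ² is a vertically symmetric admissible curve parametrized by arc-length (|γ̇| ≡ 1) with ẏ(0) = ẏ(2L) = 0, whose curvature H(s) = ⟨γ̇(s), γ̈(s)^⊥⟩ satisfies 2 + (d²/ds²)(H(s)⁻²) = λ on [0,2L] for some λ > 0. Then necessarily 3x₀ < L, λ = 2L/(L+x₀), and, with σ = π√(x₀/(L+x₀)) and κ = L/sin σ, the curve is given explicitly by x(s) = −(κ/2)[(σ/(π+σ))·sin(((π+σ)/σ)·arcsin((s−L)/κ)) + (σ/(π−σ))·sin(((π−σ)/σ)·arcsin((s−L)/κ))] and y(s) = (κ/2)[(σ/(π+σ))·cos(((π+σ)/σ)·arcsin((s−L)/κ)) + (σ/(π−σ))·cos(((π−σ)/σ)·arcsin((s−L)/κ))] + πx₀/(σ tan σ). -/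
open Real Set

noncomputable def sig (x0 L : ℝ) : ℝ := π * Real.sqrt (x0 / (L + x0))

noncomputable def kap (x0 L : ℝ) : ℝ := L / Real.sin (sig x0 L)

noncomputable def xc (x0 L s : ℝ) : ℝ :=
  -(kap x0 L / 2) *
    ((sig x0 L / (π + sig x0 L)) *
        Real.sin (((π + sig x0 L) / sig x0 L) * Real.arcsin ((s - L) / kap x0 L)) +
      (sig x0 L / (π - sig x0 L)) *
        Real.sin (((π - sig x0 L) / sig x0 L) * Real.arcsin ((s - L) / kap x0 L)))

noncomputable def yc (x0 L s : ℝ) : ℝ :=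
  kap x0 L / 2 *
    ((sig x0 L / (π + sig x0 L)) *
        Real.cos (((π + sig x0 L) / sig x0 L) * Real.arcsin ((s - L) / kap x0 L)) +
      (sig x0 L / (π - sig x0 L)) *
        Real.cos (((π - sig x0 L) / sig x0 L) * Real.arcsin ((s - L) / kap x0 L))) +
  π * x0 / (sig x0 L * Real.tan (sig x0 L))

/-- curvature `⟨ċ, c̈^⊥⟩/|ċ|³` of the plane curve `c = (u, v)`,
where `(a₁,a₂)^⊥ = (a₂,−a₁)`. -/
noncomputable def curv (u v : ℝ → ℝ) (s : ℝ) : ℝ :=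
  (deriv u s * deriv (deriv v) s - deriv v s * deriv (deriv u) s) /
    Real.sqrt (deriv u s ^ 2 + deriv v s ^ 2) ^ 3

def Admissible (x0 L : ℝ) (u v : ℝ → ℝ) : Prop :=
  ContDiffOn ℝ (⊤ : ℕ∞) u (Set.Icc 0 (2 * L)) ∧
  ContDiffOn ℝ (⊤ : ℕ∞) v (Set.Icc 0 (2 * L)) ∧
  (∀ s ∈ Set.Icc (0:ℝ) (2 * L), 0 < Real.sqrt (deriv u s ^ 2 + deriv v s ^ 2)) ∧
  Set.InjOn (fun s => (u s, v s)) (Set.Icc 0 (2 * L)) ∧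
  (∀ s ∈ Set.Icc (0:ℝ) (2 * L), 0 < curv u v s) ∧
  u 0 = x0 ∧ v 0 = 0 ∧ u (2 * L) = -x0 ∧ v (2 * L) = 0 ∧
  (∀ s ∈ Set.Ioo (0:ℝ) (2 * L), 0 < v s)

def VertSym (L : ℝ) (u v : ℝ → ℝ) : Prop :=
  ∀ s ∈ Set.Icc (0:ℝ) (2 * L), u (2 * L - s) = -u s ∧ v (2 * L - s) = v s

/-!
The equation `2 + (H⁻²)'' = λ` and the reflection symmetry force `H⁻² = A - B (s - L)²` with
`B = 1 - λ / 2`. Write the curve as a complex function `c` with unit tangent `τ`; put `ρ = 1 / H`.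
Then `c' = τ` and `τ' = (i / ρ) τ`, and `(1 - B) c + (B (s - L) + i ρ) τ` is constant. Comparing its
values at `s = 0` and `s = L` gives `B = x₀ / (L + x₀)`, and the constant determines `c` from `τ`.

With `b = √B` and `A = b² k²`, the function `arcsin ((s - L) / k) / b` is a primitive of `H`, so it
is the tangent angle up to a constant. The tangent is horizontal at `s = L`, so the first half of
the curve turns by a positive multiple of `π`; a turning of `3π / 2` would push it across the
symmetry axis, where it would meet its mirror image. Hence the turning is exactly `π`, that is
`arcsin (L / k) = π b = σ`. Therefore `k = κ`, and `σ < π / 2` is the inequality `3 x₀ < L`.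
-/

open Complex (I)
open scoped ComplexConjugate ContDiff Pointwise Topology

section Calculus

variable {E : Type*} [NormedAddCommGroup E] [NormedSpace ℝ E] {a b : ℝ}

lemma eq_of_hasDerivWithinAt_zero {f : ℝ → E}
    (hf : ∀ s ∈ Icc a b, HasDerivWithinAt f 0 (Icc a b) s) {s t : ℝ}
    (hs : s ∈ Icc a b) (ht : t ∈ Icc a b) : f s = f t := by
  have hconst := constant_of_derivWithin_zero (fun x hx => (hf x hx).differentiableWithinAt)
    fun x hx => (hf x (Ico_subset_Icc_self hx)).derivWithin
      (uniqueDiffOn_Icc (hx.1.trans_lt hx.2) x (Ico_subset_Icc_self hx))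
  rw [hconst s hs, hconst t ht]

lemma eq_quadratic_of_deriv_deriv_eq_const {f : ℝ → ℝ} {c m : ℝ}
    (hf : DifferentiableOn ℝ f (Ioo a b)) (hf' : DifferentiableOn ℝ (deriv f) (Ioo a b))
    (hf'' : ∀ s ∈ Ioo a b, deriv (deriv f) s = c) (hm : m ∈ Ioo a b) :
    ∀ s ∈ Ioo a b, f s = f m + deriv f m * (s - m) + c / 2 * (s - m) ^ 2 := by
  have hlin (s : ℝ) : HasDerivAt (fun t => deriv f m + c * (t - m)) c s := by
    simpa using (((hasDerivAt_id s).sub_const m).const_mul c).const_add (deriv f m)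
  have hquad (s : ℝ) : HasDerivAt (fun t => f m + deriv f m * (t - m) + c / 2 * (t - m) ^ 2)
      (deriv f m + c * (s - m)) s := by
    have hid := (hasDerivAt_id s).sub_const m
    refine (((hid.const_mul (deriv f m)).const_add (f m)).add
      ((hid.pow 2).const_mul (c / 2))).congr_deriv ?_
    simp only [id_eq, Nat.cast_ofNat]
    ring
  have hderiv : EqOn (deriv f) (fun t => deriv f m + c * (t - m)) (Ioo a b) :=
    isOpen_Ioo.eqOn_of_deriv_eq isPreconnected_Ioo hf'
      (fun s _ => (hlin s).differentiableAt.differentiableWithinAt)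
      (fun s hs => (hf'' s hs).trans (hlin s).deriv.symm) hm (by simp)
  exact isOpen_Ioo.eqOn_of_deriv_eq isPreconnected_Ioo hf
    (fun s _ => (hquad s).differentiableAt.differentiableWithinAt)
    (fun s hs => (hderiv hs).trans (hquad s).deriv.symm) hm (by simp)

lemma deriv_eq_zero_of_even_about {f : ℝ → ℝ} {m : ℝ}
    (hf : ∀ᶠ s in 𝓝 m, f (2 * m - s) = f s) : deriv f m = 0 := by
  have h := Filter.EventuallyEq.deriv_eq hf
  rw [deriv_comp_const_sub, show 2 * m - m = m by ring] at h
  linarith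

lemma derivWithin_reflect {f : ℝ → ℂ} {ℓ ε : ℝ}
    (hf : ∀ s ∈ Icc 0 ℓ, f (ℓ - s) = ε * conj (f s)) {s : ℝ} (hs : s ∈ Icc 0 ℓ) :
    derivWithin f (Icc 0 ℓ) (ℓ - s) = -ε * conj (derivWithin f (Icc 0 ℓ) s) := by
  have hset : ℓ +ᵥ -Icc 0 ℓ = Icc 0 ℓ := by simp
  have hrefl := derivWithin_comp_const_sub f ℓ (Icc 0 ℓ) s
  rw [derivWithin_congr hf (hf s hs), derivWithin_const_mul_field, hset] at hrefl
  have hconj : derivWithin (fun t => conj (f t)) (Icc 0 ℓ) s =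
      conj (derivWithin f (Icc 0 ℓ) s) := derivWithin.star
  rw [hconj] at hrefl
  linear_combination hrefl

-- L'Hôpital turns `v'(s) / (2 (s - a)) → v''(a) / 2` into `v(s) / (s - a)² → v''(a) / 2`.
lemma second_deriv_nonneg_of_nonneg {v w : ℝ → ℝ} {w' : ℝ} (hab : a < b)
    (hv : ∀ s ∈ Icc a b, HasDerivWithinAt v (w s) (Icc a b) s)
    (hw : HasDerivWithinAt w w' (Icc a b) a) (hva : v a = 0) (hwa : w a = 0)
    (hpos : ∀ s ∈ Ioo a b, 0 ≤ v s) : 0 ≤ w' := by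
  have hsub : Ioo a b ∈ 𝓝[>] a := Ioo_mem_nhdsGT hab
  have hle : 𝓝[>] a ≤ 𝓝[Icc a b] a := by
    rw [← nhdsWithin_Ioo_eq_nhdsGT hab]
    exact nhdsWithin_mono _ Ioo_subset_Icc_self
  have hslope : Filter.Tendsto (fun s => w s / (2 * (s - a))) (𝓝[>] a) (𝓝 (w' / 2)) := by
    have h := (hasDerivWithinAt_iff_tendsto_slope' (by simp)).1 (hw.mono Ioo_subset_Icc_self)
    rw [nhdsWithin_Ioo_eq_nhdsGT hab] at h
    refine (h.div_const 2).congr fun s => ?_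
    rw [slope_def_field, hwa, sub_zero, div_div, mul_comm]
  have hsq (s : ℝ) : HasDerivAt (fun t => (t - a) ^ 2) (2 * (s - a)) s := by
    simpa using ((hasDerivAt_id s).sub_const a).fun_pow 2
  have hquot : Filter.Tendsto (fun s => v s / (s - a) ^ 2) (𝓝[>] a) (𝓝 (w' / 2)) := by
    refine HasDerivAt.lhopital_zero_right_on_Ioo hab
      (fun s hs => (hv s (Ioo_subset_Icc_self hs)).hasDerivAt (Icc_mem_nhds hs.1 hs.2))
      (fun s _ => hsq s) (fun s hs => (mul_pos two_pos (sub_pos.2 hs.1)).ne') ?_ ?_ hslope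
    · simpa [hva] using ((hv a (left_mem_Icc.2 hab.le)).continuousWithinAt.tendsto).mono_left hle
    · simpa using ((hsq a).continuousAt.tendsto).mono_left nhdsWithin_le_nhds
  have : 0 ≤ w' / 2 := ge_of_tendsto hquot <| by
    filter_upwards [hsub] with s hs using div_nonneg (hpos s hs) (sq_nonneg _)
  linarith

end Calculus

section UnitSpeed

variable {c τ : ℝ → ℂ} {a b : ℝ}

lemma eq_im_mul_I_mul_of_norm_eq_one {S : Set ℝ} {s : ℝ} {τ' : ℂ}
    (hS : UniqueDiffWithinAt ℝ S s) (hs : s ∈ S) (hτ : HasDerivWithinAt τ τ' S s)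
    (hnorm : ∀ t ∈ S, ‖τ t‖ = 1) : τ' = (conj (τ s) * τ').im * I * τ s := by
  have hre : (conj (τ s) * τ').re = 0 := by
    have h : HasDerivWithinAt (fun t => ‖τ t‖ ^ 2) 0 S s :=
      (hasDerivWithinAt_const s S (1 : ℝ)).congr (fun t ht => by simp [hnorm t ht])
        (by simp [hnorm s hs])
    have := hS.eq_deriv _ hτ.norm_sq h
    simpa [Complex.inner, mul_comm] using this
  have him : conj (τ s) * τ' = (conj (τ s) * τ').im * I := by
    apply Complex.ext <;> simp [hre]
  calc τ' = τ s * conj (τ s) * τ' := by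
        simp [Complex.mul_conj, Complex.normSq_eq_norm_sq, hnorm s hs]
    _ = (conj (τ s) * τ').im * I * τ s := by rw [← him]; ring

lemma eq_mul_exp_of_hasDerivWithinAt {K φ : ℝ → ℝ}
    (hτ : ∀ s ∈ Icc a b, HasDerivWithinAt τ (K s * I * τ s) (Icc a b) s)
    (hφ : ∀ s ∈ Icc a b, HasDerivWithinAt φ (K s) (Icc a b) s) {s t : ℝ}
    (hs : s ∈ Icc a b) (ht : t ∈ Icc a b) :
    τ s = τ t * Complex.exp (((φ s - φ t : ℝ) : ℂ) * I) := by
  have hconst := eq_of_hasDerivWithinAt_zero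
    (f := fun r => τ r * Complex.exp (-(φ r * I))) (fun r hr => ?_) hs ht
  · rw [Complex.ofReal_sub, sub_mul, sub_eq_add_neg, Complex.exp_add, mul_left_comm, ← hconst,
      mul_left_comm, ← Complex.exp_add, add_neg_cancel, Complex.exp_zero, mul_one]
  · refine ((hτ r hr).mul ((hφ r hr).ofReal_comp.mul_const I).neg.cexp).congr_deriv ?_
    ring

lemma firstIntegral_eq {ρ : ℝ → ℝ} {B m : ℝ}
    (hc : ∀ s ∈ Icc a b, HasDerivWithinAt c (τ s) (Icc a b) s)
    (hτ : ∀ s ∈ Icc a b, HasDerivWithinAt τ ((ρ s)⁻¹ * I * τ s) (Icc a b) s)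
    (hρ : ∀ s ∈ Icc a b, HasDerivWithinAt ρ (-(B * (s - m)) / ρ s) (Icc a b) s)
    (hρ0 : ∀ s ∈ Icc a b, ρ s ≠ 0) {s t : ℝ} (hs : s ∈ Icc a b) (ht : t ∈ Icc a b) :
    (1 - B) * c s + (B * (s - m) + ρ s * I) * τ s =
      (1 - B) * c t + (B * (t - m) + ρ t * I) * τ t := by
  refine eq_of_hasDerivWithinAt_zero
    (f := fun r => (1 - B) * c r + (B * (r - m) + ρ r * I) * τ r) (fun r hr => ?_) hs ht
  have hlin : HasDerivWithinAt (fun r : ℝ => (B * (r - m) : ℂ)) B (Icc a b) r := by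
    simpa using (((hasDerivWithinAt_id r _).ofReal_comp).sub_const (m : ℂ)).const_mul (B : ℂ)
  refine (((hc r hr).const_mul (1 - B : ℂ)).add
    ((hlin.fun_add ((hρ r hr).ofReal_comp.mul_const I)).fun_mul (hτ r hr))).congr_deriv ?_
  have : (ρ r : ℂ) ≠ 0 := by exact_mod_cast hρ0 r hr
  push_cast
  field_simp
  linear_combination (τ r * (ρ r) : ℂ) * Complex.I_sq

end UnitSpeed

/-- The radius of curvature `1 / H` of a curve with `H⁻² = A - B (s - m) ^ 2`. -/
noncomputable def curvatureRadius (A B m s : ℝ) : ℝ := √(A - B * (s - m) ^ 2)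

lemma hasDerivAt_curvatureRadius {A B m s : ℝ} (hs : 0 < A - B * (s - m) ^ 2) :
    HasDerivAt (curvatureRadius A B m) (-(B * (s - m)) / curvatureRadius A B m s) s := by
  have hquad : HasDerivAt (fun t => A - B * (t - m) ^ 2) (-(B * (2 * (s - m)))) s := by
    simpa using ((((hasDerivAt_id s).sub_const m).fun_pow 2).const_mul B).const_sub A
  refine (hquad.sqrt hs.ne').congr_deriv ?_
  rw [curvatureRadius, neg_div, neg_div, mul_left_comm, mul_div_mul_left _ _ two_ne_zero]

/-- `c` is an arc-length curve on `[0, 2 L]` with unit tangent `τ`, in complex notation, which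
leaves the point `x0` of the real axis horizontally, has curvature `(A - B (s - L) ^ 2) ^ (-1 / 2)`,
reaches the imaginary axis horizontally at the midpoint `s = L`, and stays in the right half-plane
before that. -/
structure IsQuadraticRadiusCurve (x0 L A B : ℝ) (c τ : ℝ → ℂ) : Prop where
  radicand_pos : ∀ s ∈ Icc 0 (2 * L), 0 < A - B * (s - L) ^ 2
  hasDerivWithinAt_curve : ∀ s ∈ Icc 0 (2 * L), HasDerivWithinAt c (τ s) (Icc 0 (2 * L)) s
  hasDerivWithinAt_tangent : ∀ s ∈ Icc 0 (2 * L),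
    HasDerivWithinAt τ ((curvatureRadius A B L s)⁻¹ * I * τ s) (Icc 0 (2 * L)) s
  curve_zero : c 0 = x0
  tangent_zero : τ 0 = 1
  re_curve_mid : (c L).re = 0
  im_tangent_mid : (τ L).im = 0
  re_curve_nonneg : ∀ s ∈ Icc 0 L, 0 ≤ (c s).re

namespace IsQuadraticRadiusCurve

variable {x0 L A B : ℝ} {c τ : ℝ → ℂ}

lemma curvatureRadius_pos (h : IsQuadraticRadiusCurve x0 L A B c τ) {s : ℝ}
    (hs : s ∈ Icc 0 (2 * L)) : 0 < curvatureRadius A B L s :=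
  sqrt_pos.2 (h.radicand_pos s hs)

lemma firstIntegral_eq_initial (h : IsQuadraticRadiusCurve x0 L A B c τ) {s : ℝ}
    (hs : s ∈ Icc 0 (2 * L)) :
    (1 - B) * c s + (B * (s - L) + curvatureRadius A B L s * I) * τ s =
      (1 - B) * x0 - B * L + curvatureRadius A B L 0 * I := by
  rw [firstIntegral_eq h.hasDerivWithinAt_curve h.hasDerivWithinAt_tangent
    (fun r hr => (hasDerivAt_curvatureRadius (h.radicand_pos r hr)).hasDerivWithinAt)
    (fun r hr => (h.curvatureRadius_pos hr).ne') hs (left_mem_Icc.2 (hs.1.trans hs.2)),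
    h.curve_zero, h.tangent_zero]
  push_cast
  ring

lemma mul_halfLength_eq (h : IsQuadraticRadiusCurve x0 L A B c τ) (hL : 0 ≤ L) :
    B * L = (1 - B) * x0 := by
  have hmid : 0 = (1 - B) * x0 - B * L := by
    simpa [h.re_curve_mid, h.im_tangent_mid]
      using congrArg Complex.re (h.firstIntegral_eq_initial ⟨hL, by linarith⟩)
  linarith

lemma coeff_eq (h : IsQuadraticRadiusCurve x0 L A B c τ) (hx0 : 0 < x0) (hL : 0 < L) :
    B = x0 / (L + x0) := by
  rw [eq_div_iff (by positivity)]
  linarith [h.mul_halfLength_eq hL.le]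

lemma curve_eq (h : IsQuadraticRadiusCurve x0 L A B c τ) {s : ℝ} (hs : s ∈ Icc 0 (2 * L)) :
    (1 - B) * c s = curvatureRadius A B L 0 * I -
      (B * (s - L) + curvatureRadius A B L s * I) * τ s := by
  have hBL : (B * L : ℂ) = (1 - B) * x0 := by
    exact_mod_cast h.mul_halfLength_eq (by linarith [hs.1, hs.2])
  linear_combination h.firstIntegral_eq_initial hs - hBL

variable {θ : ℝ → ℝ}

lemma tangent_eq_exp (h : IsQuadraticRadiusCurve x0 L A B c τ)
    (hθ : ∀ s ∈ Icc 0 (2 * L), HasDerivWithinAt θ (curvatureRadius A B L s)⁻¹ (Icc 0 (2 * L)) s)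
    {s : ℝ} (hs : s ∈ Icc 0 (2 * L)) : τ s = Complex.exp ((θ s - θ 0 : ℝ) * I) := by
  rw [eq_mul_exp_of_hasDerivWithinAt h.hasDerivWithinAt_tangent hθ hs
    (left_mem_Icc.2 (hs.1.trans hs.2)), h.tangent_zero, one_mul]

-- Where the tangent angle equals `3π / 2` the tangent is `-I`, and `curve_eq` puts the curve into
-- the open left half-plane.
lemma turning_lt (h : IsQuadraticRadiusCurve x0 L A B c τ) (hL : 0 ≤ L) (hB : B < 1)
    (hθ : ∀ s ∈ Icc 0 (2 * L),
      HasDerivWithinAt θ (curvatureRadius A B L s)⁻¹ (Icc 0 (2 * L)) s) :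
    θ L - θ 0 < 3 * π / 2 := by
  by_contra! hturn
  have hsub : Icc 0 L ⊆ Icc 0 (2 * L) := Icc_subset_Icc_right (by linarith)
  obtain ⟨t, ht, hθt⟩ : ∃ t ∈ Icc 0 L, θ t = θ 0 + 3 * π / 2 :=
    intermediate_value_Icc hL (fun s hs => ((hθ s (hsub hs)).continuousWithinAt.mono hsub))
      ⟨by linarith [pi_pos], by linarith⟩
  have hτt : τ t = -I := by
    rw [h.tangent_eq_exp hθ (hsub ht), hθt, show θ 0 + 3 * π / 2 - θ 0 = π + π / 2 by ring]
    push_cast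
    rw [add_mul, Complex.exp_add, Complex.exp_pi_mul_I, Complex.exp_pi_div_two_mul_I]
    ring
  have hre : (1 - B) * (c t).re = -curvatureRadius A B L t := by
    simpa [hτt] using congrArg Complex.re (h.curve_eq (hsub ht))
  have := mul_nonneg (sub_pos.2 hB).le (h.re_curve_nonneg t ht)
  linarith [h.curvatureRadius_pos (hsub ht)]

lemma turning_eq_pi (h : IsQuadraticRadiusCurve x0 L A B c τ) (hL : 0 ≤ L) (hB : B < 1)
    (hθ : ∀ s ∈ Icc 0 (2 * L),
      HasDerivWithinAt θ (curvatureRadius A B L s)⁻¹ (Icc 0 (2 * L)) s)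
    (hpos : θ 0 < θ L) : θ L - θ 0 = π := by
  have hsin : sin (θ L - θ 0) = 0 := by
    simpa only [h.tangent_eq_exp hθ ⟨hL, by linarith⟩, Complex.exp_ofReal_mul_I_im]
      using h.im_tangent_mid
  have hturn := h.turning_lt hL hB hθ
  obtain ⟨n, hn⟩ := sin_eq_zero_iff.1 hsin
  have hn0 : (0 : ℝ) < n := pos_of_mul_pos_left (by linarith) pi_pos.le
  have hn2 : (n : ℝ) < 2 := lt_of_mul_lt_mul_right (by linarith [pi_pos]) pi_pos.le
  have hn1 : n = 1 := by
    have : 0 < n := by exact_mod_cast hn0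
    have : n < 2 := by exact_mod_cast hn2
    omega
  rw [← hn, hn1, Int.cast_one, one_mul]

lemma exists_scale (h : IsQuadraticRadiusCurve x0 L A B c τ) (hx0 : 0 < x0) (hL : 0 < L) :
    ∃ b k, 0 < b ∧ L < k ∧ B = b ^ 2 ∧ A = b ^ 2 * k ^ 2 := by
  have hB : 0 < B := by rw [h.coeff_eq hx0 hL]; positivity
  have hA : B * L ^ 2 < A := by
    have := h.radicand_pos 0 ⟨le_rfl, by positivity⟩
    linarith [neg_sq L, zero_sub L ▸ this]
  have hAB : L ^ 2 < A / B := by rwa [lt_div_iff₀' hB]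
  refine ⟨√B, √(A / B), sqrt_pos.2 hB, lt_sqrt_of_sq_lt hAB, (sq_sqrt hB.le).symm, ?_⟩
  rw [sq_sqrt hB.le, sq_sqrt ((sq_nonneg L).trans hAB.le), mul_div_cancel₀ _ hB.ne']

end IsQuadraticRadiusCurve

section Arcsine

variable {b k m L s : ℝ}

lemma curvatureRadius_eq_mul_cos (hb : 0 ≤ b) (hk : 0 < k) :
    curvatureRadius (b ^ 2 * k ^ 2) (b ^ 2) m s = b * k * cos (arcsin ((s - m) / k)) := by
  have hfactor : b ^ 2 * k ^ 2 - b ^ 2 * (s - m) ^ 2 = (b * k) ^ 2 * (1 - ((s - m) / k) ^ 2) := by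
    field_simp
  rw [curvatureRadius, hfactor, sqrt_mul (sq_nonneg _), sqrt_sq (mul_nonneg hb hk.le), cos_arcsin]

lemma sub_div_mem_Ioo (hLk : L < k) (hs : s ∈ Icc 0 (2 * L)) :
    (s - L) / k ∈ Ioo (-1) 1 := by
  have hk : 0 < k := by linarith [hs.1, hs.2]
  exact ⟨by rw [lt_div_iff₀ hk]; linarith [hs.1], by rw [div_lt_iff₀ hk]; linarith [hs.2]⟩

lemma hasDerivAt_arcsin_div (hb : 0 ≤ b) (hk : 0 < k) (hs : (s - m) / k ∈ Ioo (-1) 1) :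
    HasDerivAt (fun t => arcsin ((t - m) / k) / b)
      (curvatureRadius (b ^ 2 * k ^ 2) (b ^ 2) m s)⁻¹ s := by
  have harcsin := (hasDerivAt_arcsin hs.1.ne' hs.2.ne).comp s
    (((hasDerivAt_id s).sub_const m).div_const k)
  refine (harcsin.div_const b).congr_deriv ?_
  rw [curvatureRadius_eq_mul_cos hb hk, cos_arcsin]
  field_simp

lemma hasDerivWithinAt_arcsin_div (hb : 0 < b) (hLk : L < k) :
    ∀ s ∈ Icc 0 (2 * L), HasDerivWithinAt (fun t => arcsin ((t - L) / k) / b)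
      (curvatureRadius (b ^ 2 * k ^ 2) (b ^ 2) L s)⁻¹ (Icc 0 (2 * L)) s := fun s hs =>
  (hasDerivAt_arcsin_div hb.le (by linarith [hs.1, hs.2])
    (sub_div_mem_Ioo hLk hs)).hasDerivWithinAt

end Arcsine

section ClosedForm

variable {x0 L b k s : ℝ}

lemma pi_add_div_mul (hb : b ≠ 0) (ψ : ℝ) : (π + π * b) / (π * b) * ψ = ψ / b + ψ := by
  field_simp

lemma pi_sub_div_mul (hb : b ≠ 0) (ψ : ℝ) : (π - π * b) / (π * b) * ψ = ψ / b - ψ := by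
  field_simp

lemma mul_xc_eq (hb : 0 < b) (hb1 : b < 1) (hsig : sig x0 L = π * b) (hkap : kap x0 L = k) :
    (1 - b ^ 2) * xc x0 L s =
      b * k * (b * sin (arcsin ((s - L) / k)) * cos (arcsin ((s - L) / k) / b) -
        cos (arcsin ((s - L) / k)) * sin (arcsin ((s - L) / k) / b)) := by
  have h1b : 1 - b ≠ 0 := (sub_pos.2 hb1).ne'
  rw [xc, hsig, hkap, pi_add_div_mul hb.ne', pi_sub_div_mul hb.ne', sin_add, sin_sub,
    ← mul_one_add, ← mul_one_sub, mul_div_mul_left _ _ pi_ne_zero, mul_div_mul_left _ _ pi_ne_zero]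
  field_simp
  ring

lemma mul_yc_eq (hb : 0 < b) (hb1 : b < 1) (hsig : sig x0 L = π * b) (hkap : kap x0 L = k) :
    (1 - b ^ 2) * yc x0 L s =
      b * k * (b * sin (arcsin ((s - L) / k)) * sin (arcsin ((s - L) / k) / b) +
        cos (arcsin ((s - L) / k)) * cos (arcsin ((s - L) / k) / b)) +
      (1 - b ^ 2) * (x0 / (b * tan (π * b))) := by
  have h1b : 1 - b ≠ 0 := (sub_pos.2 hb1).ne'
  rw [yc, hsig, hkap, pi_add_div_mul hb.ne', pi_sub_div_mul hb.ne', cos_add, cos_sub,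
    ← mul_one_add, ← mul_one_sub, mul_div_mul_left _ _ pi_ne_zero, mul_div_mul_left _ _ pi_ne_zero,
    mul_assoc π b, mul_div_mul_left _ _ pi_ne_zero, mul_add, add_left_inj]
  field_simp
  ring

end ClosedForm

namespace IsQuadraticRadiusCurve

variable {x0 L A B b k : ℝ} {c τ : ℝ → ℂ}

lemma arcsin_eq (h : IsQuadraticRadiusCurve x0 L (b ^ 2 * k ^ 2) (b ^ 2) c τ) (hL : 0 < L)
    (hb : 0 < b) (hb1 : b < 1) (hLk : L < k) : arcsin (L / k) = π * b := by
  have harcsin : 0 < arcsin (L / k) := arcsin_pos.2 (div_pos hL (hL.trans hLk))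
  have hzero : arcsin ((0 - L) / k) / b = -(arcsin (L / k) / b) := by
    rw [zero_sub, neg_div, arcsin_neg, neg_div]
  have hmid : arcsin ((L - L) / k) / b = 0 := by simp
  have hturn := h.turning_eq_pi hL.le (pow_lt_one₀ hb.le hb1 two_ne_zero)
    (hasDerivWithinAt_arcsin_div hb hLk) (by rw [hzero, hmid, neg_lt_zero]; positivity)
  rwa [hzero, hmid, zero_sub, neg_neg, div_eq_iff hb.ne'] at hturn

lemma sin_pi_mul_eq (h : IsQuadraticRadiusCurve x0 L (b ^ 2 * k ^ 2) (b ^ 2) c τ) (hL : 0 < L)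
    (hb : 0 < b) (hb1 : b < 1) (hLk : L < k) : sin (π * b) = L / k := by
  have hk : 0 < k := hL.trans hLk
  rw [← h.arcsin_eq hL hb hb1 hLk, sin_arcsin (by linarith [div_pos hL hk])
    ((div_lt_one hk).2 hLk).le]

lemma kap_eq (h : IsQuadraticRadiusCurve x0 L (b ^ 2 * k ^ 2) (b ^ 2) c τ) (hL : 0 < L)
    (hb : 0 < b) (hb1 : b < 1) (hLk : L < k) (hsig : sig x0 L = π * b) : kap x0 L = k := by
  rw [kap, hsig, h.sin_pi_mul_eq hL hb hb1 hLk, div_div_cancel₀ hL.ne']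

lemma tangent_eq_neg_exp (h : IsQuadraticRadiusCurve x0 L (b ^ 2 * k ^ 2) (b ^ 2) c τ)
    (hL : 0 < L) (hb : 0 < b) (hb1 : b < 1) (hLk : L < k) {s : ℝ} (hs : s ∈ Icc 0 (2 * L)) :
    τ s = -Complex.exp ((arcsin ((s - L) / k) / b : ℝ) * I) := by
  have hzero : arcsin ((0 - L) / k) / b = -π := by
    rw [zero_sub, neg_div, arcsin_neg, h.arcsin_eq hL hb hb1 hLk, neg_div,
      mul_div_cancel_right₀ _ hb.ne']
  rw [h.tangent_eq_exp (hasDerivWithinAt_arcsin_div hb hLk) hs, hzero, sub_neg_eq_add,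
    Complex.ofReal_add, add_mul, Complex.exp_add, Complex.exp_pi_mul_I, mul_neg_one]

lemma curvatureRadius_zero (h : IsQuadraticRadiusCurve x0 L (b ^ 2 * k ^ 2) (b ^ 2) c τ)
    (hL : 0 < L) (hb : 0 < b) (hb1 : b < 1) (hLk : L < k) :
    curvatureRadius (b ^ 2 * k ^ 2) (b ^ 2) L 0 = (1 - b ^ 2) * (x0 / (b * tan (π * b))) := by
  have hk : 0 < k := hL.trans hLk
  rw [curvatureRadius_eq_mul_cos hb.le hk, zero_sub, neg_div, arcsin_neg, cos_neg,
    h.arcsin_eq hL hb hb1 hLk, ← mul_div_assoc, ← h.mul_halfLength_eq hL.le, tan_eq_sin_div_cos,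
    h.sin_pi_mul_eq hL hb hb1 hLk]
  field_simp

lemma re_curve_eq (h : IsQuadraticRadiusCurve x0 L A B c τ) {s φ : ℝ} (hs : s ∈ Icc 0 (2 * L))
    (hτ : τ s = -Complex.exp (φ * I)) :
    (1 - B) * (c s).re = B * (s - L) * cos φ - curvatureRadius A B L s * sin φ := by
  simpa [hτ, Complex.exp_ofReal_mul_I_re, Complex.exp_ofReal_mul_I_im]
    using congrArg Complex.re (h.curve_eq hs)

lemma im_curve_eq (h : IsQuadraticRadiusCurve x0 L A B c τ) {s φ : ℝ} (hs : s ∈ Icc 0 (2 * L))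
    (hτ : τ s = -Complex.exp (φ * I)) :
    (1 - B) * (c s).im = curvatureRadius A B L 0 +
      (B * (s - L) * sin φ + curvatureRadius A B L s * cos φ) := by
  simpa [hτ, Complex.exp_ofReal_mul_I_re, Complex.exp_ofReal_mul_I_im]
    using congrArg Complex.im (h.curve_eq hs)

lemma curve_eq_closedForm (h : IsQuadraticRadiusCurve x0 L (b ^ 2 * k ^ 2) (b ^ 2) c τ)
    (hL : 0 < L) (hb : 0 < b) (hb1 : b < 1) (hLk : L < k) (hsig : sig x0 L = π * b)
    {s : ℝ} (hs : s ∈ Icc 0 (2 * L)) : (c s).re = xc x0 L s ∧ (c s).im = yc x0 L s := by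
  have hk : 0 < k := hL.trans hLk
  have hb2 : 1 - b ^ 2 ≠ 0 := (sub_pos.2 (pow_lt_one₀ hb.le hb1 two_ne_zero)).ne'
  have hkap := h.kap_eq hL hb hb1 hLk hsig
  have harg := sub_div_mem_Ioo hLk hs
  have hsin : s - L = k * sin (arcsin ((s - L) / k)) := by
    rw [sin_arcsin harg.1.le harg.2.le, mul_div_cancel₀ _ hk.ne']
  have hτ := h.tangent_eq_neg_exp hL hb hb1 hLk hs
  constructor <;> apply mul_left_cancel₀ hb2
  · rw [mul_xc_eq hb hb1 hsig hkap, h.re_curve_eq hs hτ, curvatureRadius_eq_mul_cos hb.le hk]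
    linear_combination b ^ 2 * cos (arcsin ((s - L) / k) / b) * hsin
  · rw [mul_yc_eq hb hb1 hsig hkap, h.im_curve_eq hs hτ, h.curvatureRadius_zero hL hb hb1 hLk,
      curvatureRadius_eq_mul_cos hb.le hk]
    linear_combination b ^ 2 * sin (arcsin ((s - L) / k) / b) * hsin

theorem closedForm (h : IsQuadraticRadiusCurve x0 L A B c τ) (hx0 : 0 < x0) (hL : 0 < L) :
    3 * x0 < L ∧ ∀ s ∈ Icc 0 (2 * L), (c s).re = xc x0 L s ∧ (c s).im = yc x0 L s := by
  obtain ⟨b, k, hb, hLk, rfl, rfl⟩ := h.exists_scale hx0 hL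
  have hcoeff := h.coeff_eq hx0 hL
  have hb1 : b < 1 := by
    rw [← sq_lt_one_iff₀ hb.le, hcoeff, div_lt_one (by positivity)]
    linarith
  have hsig : sig x0 L = π * b := by rw [sig, ← hcoeff, sqrt_sq hb.le]
  have hhalf : b < 1 / 2 := by
    have : π * b < π / 2 := by
      rw [← h.arcsin_eq hL hb hb1 hLk]
      exact arcsin_lt_pi_div_two.2 ((div_lt_one (hL.trans hLk)).2 hLk)
    exact lt_of_mul_lt_mul_left (by linarith) pi_pos.le
  refine ⟨?_, fun s hs => h.curve_eq_closedForm hL hb hb1 hLk hsig hs⟩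
  have hquarter : x0 / (L + x0) < 1 / 4 := by
    rw [← hcoeff]
    nlinarith
  rw [div_lt_iff₀ (by positivity)] at hquarter
  linarith

end IsQuadraticRadiusCurve

/-- The plane curve `(u, v)` as the complex-valued function `u + i v`. -/
noncomputable def complexCurve (u v : ℝ → ℝ) (s : ℝ) : ℂ := u s + v s * I

/-- The velocity of `(u, v)` on `[0, 2 L]`, as a complex number. It is one-sided at the two ends,
where `deriv` sees the values of `u` and `v` outside the interval. -/
noncomputable def velocity (L : ℝ) (u v : ℝ → ℝ) : ℝ → ℂ :=
  derivWithin (complexCurve u v) (Icc 0 (2 * L))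

/-- The curvature `⟨γ̇, γ̈^⊥⟩` of an arc-length curve `γ = (u, v)` on `[0, 2 L]`, one-sided at the
two ends: for complex numbers `⟨a, b^⊥⟩` is the imaginary part of `conj a * b`. -/
noncomputable def arcCurvature (L : ℝ) (u v : ℝ → ℝ) (s : ℝ) : ℝ :=
  (conj (velocity L u v s) * derivWithin (velocity L u v) (Icc 0 (2 * L)) s).im

/-- `(u, v)` is smooth on `[0, 2 L]` and parametrized by arc-length. -/
structure IsUnitSpeedCurve (L : ℝ) (u v : ℝ → ℝ) : Prop where
  length_pos : 0 < L
  contDiffOn_fst : ContDiffOn ℝ ∞ u (Icc 0 (2 * L))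
  contDiffOn_snd : ContDiffOn ℝ ∞ v (Icc 0 (2 * L))
  speed_sq : ∀ s ∈ Ioo 0 (2 * L), deriv u s ^ 2 + deriv v s ^ 2 = 1

lemma deriv_complexCurve {u v : ℝ → ℝ} {s : ℝ} (hu : DifferentiableAt ℝ u s)
    (hv : DifferentiableAt ℝ v s) :
    deriv (complexCurve u v) s = complexCurve (deriv u) (deriv v) s :=
  (hu.hasDerivAt.ofReal_comp.fun_add (hv.hasDerivAt.ofReal_comp.mul_const I)).deriv

lemma hasDerivWithinAt_re {f : ℝ → ℂ} {f' : ℂ} {S : Set ℝ} {s : ℝ}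
    (hf : HasDerivWithinAt f f' S s) : HasDerivWithinAt (fun t => (f t).re) f'.re S s :=
  Complex.reCLM.hasFDerivAt.comp_hasDerivWithinAt s hf

lemma hasDerivWithinAt_im {f : ℝ → ℂ} {f' : ℂ} {S : Set ℝ} {s : ℝ}
    (hf : HasDerivWithinAt f f' S s) : HasDerivWithinAt (fun t => (f t).im) f'.im S s :=
  Complex.imCLM.hasFDerivAt.comp_hasDerivWithinAt s hf

@[simp]
lemma complexCurve_re (u v : ℝ → ℝ) (s : ℝ) : (complexCurve u v s).re = u s := by
  simp [complexCurve]

@[simp]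
lemma complexCurve_im (u v : ℝ → ℝ) (s : ℝ) : (complexCurve u v s).im = v s := by
  simp [complexCurve]

lemma pos_and_eq_inv_sqrt_of_inv_sq_eq {a b : ℝ} {f q : ℝ → ℝ} (hab : a ≠ b)
    (hf : ContinuousOn f (Icc a b)) (hq : ContinuousOn q (Icc a b))
    (hpos : ∀ s ∈ Ioo a b, 0 < f s) (hfq : ∀ s ∈ Ioo a b, (f s ^ 2)⁻¹ = q s) :
    ∀ s ∈ Icc a b, 0 < q s ∧ f s = (√(q s))⁻¹ := by
  have hclosure : Icc a b ⊆ closure (Ioo a b) := (closure_Ioo hab).ge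
  have hmul : EqOn (fun s => f s ^ 2 * q s) (fun _ => 1) (Icc a b) :=
    EqOn.of_subset_closure
      (fun s hs => by simp [← hfq s hs, (hpos s hs).ne'])
      ((hf.pow 2).mul hq) continuousOn_const Ioo_subset_Icc_self hclosure
  have hnonneg : ∀ s ∈ Icc a b, 0 ≤ f s := fun s hs =>
    continuousWithinAt_const.closure_le (hclosure hs) ((hf s hs).mono Ioo_subset_Icc_self)
      fun t ht => (hpos t ht).le
  intro s hs
  have hone : f s ^ 2 * q s = 1 := hmul hs
  have hqs : 0 < q s := pos_of_mul_pos_right (hone ▸ one_pos) (sq_nonneg _)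
  refine ⟨hqs, ?_⟩
  rw [← sqrt_inv, ← eq_inv_of_mul_eq_one_left hone, sqrt_sq (hnonneg s hs)]

namespace IsUnitSpeedCurve

variable {L : ℝ} {u v : ℝ → ℝ}

lemma uniqueDiffOn (h : IsUnitSpeedCurve L u v) : UniqueDiffOn ℝ (Icc 0 (2 * L)) :=
  uniqueDiffOn_Icc (mul_pos two_pos h.length_pos)

lemma contDiffOn_complexCurve (h : IsUnitSpeedCurve L u v) :
    ContDiffOn ℝ ∞ (complexCurve u v) (Icc 0 (2 * L)) :=
  (Complex.ofRealCLM.contDiff.comp_contDiffOn h.contDiffOn_fst).add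
    ((Complex.ofRealCLM.contDiff.comp_contDiffOn h.contDiffOn_snd).mul contDiffOn_const)

lemma contDiffOn_velocity (h : IsUnitSpeedCurve L u v) :
    ContDiffOn ℝ ∞ (velocity L u v) (Icc 0 (2 * L)) :=
  ((contDiffOn_infty_iff_derivWithin h.uniqueDiffOn).1 h.contDiffOn_complexCurve).2

lemma contDiffOn_arcCurvature (h : IsUnitSpeedCurve L u v) :
    ContDiffOn ℝ ∞ (arcCurvature L u v) (Icc 0 (2 * L)) := by
  have hacc := ((contDiffOn_infty_iff_derivWithin h.uniqueDiffOn).1 h.contDiffOn_velocity).2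
  exact Complex.imCLM.contDiff.comp_contDiffOn
    ((Complex.conjCLE.contDiff.comp_contDiffOn h.contDiffOn_velocity).mul hacc)

lemma hasDerivWithinAt_complexCurve (h : IsUnitSpeedCurve L u v) {s : ℝ}
    (hs : s ∈ Icc 0 (2 * L)) :
    HasDerivWithinAt (complexCurve u v) (velocity L u v s) (Icc 0 (2 * L)) s :=
  (h.contDiffOn_complexCurve.differentiableOn (by simp) s hs).hasDerivWithinAt

lemma velocity_eq (h : IsUnitSpeedCurve L u v) {s : ℝ} (hs : s ∈ Ioo 0 (2 * L)) :
    velocity L u v s = complexCurve (deriv u) (deriv v) s := by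
  have hmem := Icc_mem_nhds hs.1 hs.2
  rw [velocity, derivWithin_of_mem_nhds hmem, deriv_complexCurve
    ((h.contDiffOn_fst.differentiableOn (by simp)).differentiableAt hmem)
    ((h.contDiffOn_snd.differentiableOn (by simp)).differentiableAt hmem)]

lemma derivWithin_velocity_eq (h : IsUnitSpeedCurve L u v) {s : ℝ} (hs : s ∈ Ioo 0 (2 * L)) :
    derivWithin (velocity L u v) (Icc 0 (2 * L)) s =
      complexCurve (deriv (deriv u)) (deriv (deriv v)) s := by
  have hmem := Ioo_mem_nhds hs.1 hs.2
  have hdiff {f : ℝ → ℝ} (hf : ContDiffOn ℝ ∞ f (Icc 0 (2 * L))) :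
      DifferentiableAt ℝ (deriv f) s :=
    (((contDiffOn_infty_iff_deriv_of_isOpen isOpen_Ioo).1
      (hf.mono Ioo_subset_Icc_self)).2.differentiableOn (by simp)).differentiableAt hmem
  have hvel : velocity L u v =ᶠ[𝓝 s] complexCurve (deriv u) (deriv v) := by
    filter_upwards [hmem] with t ht using h.velocity_eq ht
  rw [derivWithin_of_mem_nhds (Icc_mem_nhds hs.1 hs.2), hvel.deriv_eq,
    deriv_complexCurve (hdiff h.contDiffOn_fst) (hdiff h.contDiffOn_snd)]

lemma arcCurvature_eq (h : IsUnitSpeedCurve L u v) {s : ℝ} (hs : s ∈ Ioo 0 (2 * L)) :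
    arcCurvature L u v s = deriv u s * deriv (deriv v) s - deriv v s * deriv (deriv u) s := by
  rw [arcCurvature, h.velocity_eq hs, h.derivWithin_velocity_eq hs]
  simp [sub_eq_add_neg]

lemma curv_eq (h : IsUnitSpeedCurve L u v) {s : ℝ} (hs : s ∈ Ioo 0 (2 * L)) :
    curv u v s = arcCurvature L u v s := by
  rw [curv, h.speed_sq s hs, sqrt_one, one_pow, div_one, h.arcCurvature_eq hs]

lemma norm_velocity (h : IsUnitSpeedCurve L u v) :
    ∀ s ∈ Icc 0 (2 * L), ‖velocity L u v s‖ = 1 := by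
  have hopen : EqOn (fun s => ‖velocity L u v s‖) (fun _ => 1) (Ioo 0 (2 * L)) := fun s hs => by
    simp only [h.velocity_eq hs, ← sq_eq_sq₀ (norm_nonneg _) zero_le_one,
      ← Complex.normSq_eq_norm_sq, Complex.normSq_apply, complexCurve_re,
      complexCurve_im, ← sq, h.speed_sq s hs, one_pow]
  exact hopen.of_subset_closure h.contDiffOn_velocity.continuousOn.norm continuousOn_const
    Ioo_subset_Icc_self (closure_Ioo (mul_pos two_pos h.length_pos).ne).ge

lemma hasDerivWithinAt_velocity (h : IsUnitSpeedCurve L u v) {s : ℝ} (hs : s ∈ Icc 0 (2 * L)) :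
    HasDerivWithinAt (velocity L u v) (arcCurvature L u v s * I * velocity L u v s)
      (Icc 0 (2 * L)) s := by
  have hderiv := (h.contDiffOn_velocity.differentiableOn (by simp) s hs).hasDerivWithinAt
  exact hderiv.congr_deriv
    (eq_im_mul_I_mul_of_norm_eq_one (h.uniqueDiffOn s hs) hs hderiv h.norm_velocity)

-- The assumptions at `0` are about the two-sided `deriv`; as `deriv u 0 ≠ 0`, at least that one is
-- an honest derivative, and it determines the velocity up to sign.
lemma velocity_zero (h : IsUnitSpeedCurve L u v) (hspeed : deriv u 0 ^ 2 + deriv v 0 ^ 2 = 1)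
    (hdv : deriv v 0 = 0) (hv0 : v 0 = 0) (hv : ∀ s ∈ Ioo 0 (2 * L), 0 ≤ v s)
    (hK : 0 < arcCurvature L u v 0) : velocity L u v 0 = 1 := by
  have h2L : 0 < 2 * L := mul_pos two_pos h.length_pos
  have h0 : (0 : ℝ) ∈ Icc 0 (2 * L) := left_mem_Icc.2 h2L.le
  have hre_sq : (velocity L u v 0).re ^ 2 = 1 := by
    have hdu : deriv u 0 ^ 2 = 1 := by simpa [hdv] using hspeed
    have hu : DifferentiableAt ℝ u 0 :=
      differentiableAt_of_deriv_ne_zero fun h0 => by simp [h0] at hdu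
    have hwithin := hasDerivWithinAt_re (h.hasDerivWithinAt_complexCurve h0)
    simp only [complexCurve_re] at hwithin
    rw [← (h.uniqueDiffOn 0 h0).eq_deriv _ hu.hasDerivAt.hasDerivWithinAt hwithin, hdu]
  have him : (velocity L u v 0).im = 0 := by
    have hnorm := Complex.sq_norm (velocity L u v 0)
    rw [h.norm_velocity 0 h0, Complex.normSq_apply] at hnorm
    exact pow_eq_zero_iff two_ne_zero |>.1 (by linarith)
  have hre_nonneg : 0 ≤ (velocity L u v 0).re := by
    have hacc := second_deriv_nonneg_of_nonneg h2L
      (fun s hs => hasDerivWithinAt_im (h.hasDerivWithinAt_complexCurve hs))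
      (hasDerivWithinAt_im (h.hasDerivWithinAt_velocity h0)) (by simpa using hv0) him
      (by simpa using hv)
    exact nonneg_of_mul_nonneg_right (by simpa using hacc) hK
  exact Complex.ext ((pow_eq_one_iff_of_nonneg hre_nonneg two_ne_zero).1 hre_sq) him

end IsUnitSpeedCurve

namespace VertSym

variable {L : ℝ} {u v : ℝ → ℝ}

lemma complexCurve_reflect (hsym : VertSym L u v) {s : ℝ} (hs : s ∈ Icc 0 (2 * L)) :
    complexCurve u v (2 * L - s) = (-1 : ℝ) * conj (complexCurve u v s) := by
  apply Complex.ext <;> simp [hsym s hs]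

lemma velocity_reflect (hsym : VertSym L u v) {s : ℝ} (hs : s ∈ Icc 0 (2 * L)) :
    velocity L u v (2 * L - s) = (1 : ℝ) * conj (velocity L u v s) := by
  simpa [velocity] using derivWithin_reflect (fun t ht => hsym.complexCurve_reflect ht) hs

lemma arcCurvature_reflect (hsym : VertSym L u v) {s : ℝ} (hs : s ∈ Icc 0 (2 * L)) :
    arcCurvature L u v (2 * L - s) = arcCurvature L u v s := by
  have hacc : derivWithin (velocity L u v) (Icc 0 (2 * L)) (2 * L - s) =
      -conj (derivWithin (velocity L u v) (Icc 0 (2 * L)) s) := by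
    simpa using derivWithin_reflect (fun t ht => hsym.velocity_reflect ht) hs
  rw [arcCurvature, arcCurvature, hsym.velocity_reflect hs, hacc]
  simp [add_comm]

lemma fst_mid (hsym : VertSym L u v) (hL : 0 ≤ L) : u L = 0 := by
  have := (hsym L ⟨hL, by linarith⟩).1
  rw [show 2 * L - L = L by ring] at this
  linarith

lemma velocity_mid_im (hsym : VertSym L u v) (hL : 0 ≤ L) : (velocity L u v L).im = 0 := by
  have := congrArg Complex.im (hsym.velocity_reflect (s := L) ⟨hL, by linarith⟩)
  rw [show 2 * L - L = L by ring] at this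
  simp only [Complex.ofReal_one, one_mul, Complex.conj_im] at this
  linarith

-- A zero of `u` before the midpoint would be a self-intersection of the curve on the axis.
lemma fst_nonneg (hsym : VertSym L u v) (hu : ContinuousOn u (Icc 0 (2 * L)))
    (hinj : InjOn (fun s => (u s, v s)) (Icc 0 (2 * L))) (hu0 : 0 ≤ u 0) :
    ∀ s ∈ Icc 0 L, 0 ≤ u s := by
  intro s hs
  by_contra! hneg
  have hsub : Icc 0 s ⊆ Icc 0 (2 * L) := Icc_subset_Icc_right (by linarith [hs.1, hs.2])
  obtain ⟨t, ht, hut⟩ := intermediate_value_Icc' hs.1 (hu.mono hsub) ⟨hneg.le, hu0⟩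
  have hreflect : 2 * L - t ∈ Icc 0 (2 * L) :=
    ⟨by linarith [hs.1, hs.2, ht.2], by linarith [ht.1]⟩
  have hsame := hinj hreflect (hsub ht) (by simp [hsym t (hsub ht), hut])
  have hts : t = s := by linarith [ht.2, hs.2]
  exact hneg.ne (hts ▸ hut)

end VertSym

namespace IsUnitSpeedCurve

variable {L lam : ℝ} {u v : ℝ → ℝ}

lemma inv_sq_arcCurvature_eq (h : IsUnitSpeedCurve L u v) (hsym : VertSym L u v)
    (hK : ∀ s ∈ Ioo 0 (2 * L), 0 < arcCurvature L u v s)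
    (hEL : ∀ s ∈ Ioo 0 (2 * L), 2 + deriv (deriv fun t =>
      ((deriv u t * deriv (deriv v) t - deriv v t * deriv (deriv u) t) ^ 2)⁻¹) s = lam) :
    ∀ s ∈ Ioo 0 (2 * L), (arcCurvature L u v s ^ 2)⁻¹ =
      (arcCurvature L u v L ^ 2)⁻¹ - (1 - lam / 2) * (s - L) ^ 2 := by
  have hmid : L ∈ Ioo 0 (2 * L) := ⟨h.length_pos, by linarith [h.length_pos]⟩
  have hsmooth : ContDiffOn ℝ ∞ (fun t => (arcCurvature L u v t ^ 2)⁻¹) (Ioo 0 (2 * L)) :=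
    ((h.contDiffOn_arcCurvature.mono Ioo_subset_Icc_self).pow 2).inv
      fun s hs => (pow_pos (hK s hs) 2).ne'
  obtain ⟨hdiff, hsmooth'⟩ := (contDiffOn_infty_iff_deriv_of_isOpen isOpen_Ioo).1 hsmooth
  have hsecond : ∀ s ∈ Ioo 0 (2 * L),
      deriv (deriv fun t => (arcCurvature L u v t ^ 2)⁻¹) s = lam - 2 := fun s hs => by
    have hcongr : (fun t => (arcCurvature L u v t ^ 2)⁻¹) =ᶠ[𝓝 s] fun t =>
        ((deriv u t * deriv (deriv v) t - deriv v t * deriv (deriv u) t) ^ 2)⁻¹ := by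
      filter_upwards [Ioo_mem_nhds hs.1 hs.2] with t ht
      rw [h.arcCurvature_eq ht]
    linarith [hEL s hs, hcongr.deriv.deriv_eq]
  have hfirst : deriv (fun t => (arcCurvature L u v t ^ 2)⁻¹) L = 0 :=
    deriv_eq_zero_of_even_about <| by
      filter_upwards [Icc_mem_nhds hmid.1 hmid.2] with t ht
      rw [hsym.arcCurvature_reflect ht]
  intro s hs
  rw [eq_quadratic_of_deriv_deriv_eq_const hdiff (hsmooth'.differentiableOn (by simp)) hsecond
    hmid s hs, hfirst]
  ring

end IsUnitSpeedCurve

lemma Admissible.isQuadraticRadiusCurve {x0 L lam : ℝ} {u v : ℝ → ℝ} (hx0 : 0 ≤ x0) (hL : 0 < L)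
    (hadm : Admissible x0 L u v) (hsym : VertSym L u v)
    (harc : ∀ s ∈ Icc 0 (2 * L), deriv u s ^ 2 + deriv v s ^ 2 = 1) (hv0 : deriv v 0 = 0)
    (hEL : ∀ s ∈ Icc 0 (2 * L), 2 + deriv (deriv fun t =>
      ((deriv u t * deriv (deriv v) t - deriv v t * deriv (deriv u) t) ^ 2)⁻¹) s = lam) :
    ∃ A, IsQuadraticRadiusCurve x0 L A (1 - lam / 2) (complexCurve u v) (velocity L u v) := by
  obtain ⟨hu, hv, -, hinj, hcurv, hu_zero, hv_zero, -, -, hv_pos⟩ := hadm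
  have h0 : (0 : ℝ) ∈ Icc 0 (2 * L) := ⟨le_rfl, by positivity⟩
  have h : IsUnitSpeedCurve L u v := ⟨hL, hu, hv, fun s hs => harc s (Ioo_subset_Icc_self hs)⟩
  have hK : ∀ s ∈ Ioo 0 (2 * L), 0 < arcCurvature L u v s := fun s hs => by
    rw [← h.curv_eq hs]
    exact hcurv s (Ioo_subset_Icc_self hs)
  have hradius := pos_and_eq_inv_sqrt_of_inv_sq_eq (by positivity)
    h.contDiffOn_arcCurvature.continuousOn (by fun_prop) hK
    (h.inv_sq_arcCurvature_eq hsym hK fun s hs => hEL s (Ioo_subset_Icc_self hs))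
  refine ⟨(arcCurvature L u v L ^ 2)⁻¹, fun s hs => (hradius s hs).1,
    fun s hs => h.hasDerivWithinAt_complexCurve hs, fun s hs => ?_, ?_, ?_, ?_,
    hsym.velocity_mid_im hL.le, ?_⟩
  · rw [curvatureRadius, ← (hradius s hs).2]
    exact h.hasDerivWithinAt_velocity hs
  · simp [complexCurve, hu_zero, hv_zero]
  · refine h.velocity_zero (harc 0 h0) hv0 hv_zero (fun s hs => (hv_pos s hs).le) ?_
    rw [(hradius 0 h0).2]
    exact inv_pos.2 (sqrt_pos.2 (hradius 0 h0).1)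
  · simpa using hsym.fst_mid hL.le
  · simpa using hsym.fst_nonneg hu.continuousOn hinj (hu_zero ▸ hx0)

/-- rigidity of vertically symmetric, arc-length admissible solutions of the
Euler–Lagrange equation `2 + (H⁻²)'' = λ` with tangential boundary contact.
Here, since the curve is parametrized by arc-length, its curvature is
`H = u̇ v̈ − v̇ ü = ⟨γ̇, γ̈^⊥⟩`. -/
theorem statement1 (x0 L lam : ℝ) (hx0 : 0 < x0) (hL : 0 < L) (hlam : 0 < lam)
    (u v : ℝ → ℝ)
    (hadm : Admissible x0 L u v)
    (hsym : VertSym L u v)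
    (harc : ∀ s ∈ Set.Icc (0:ℝ) (2 * L), deriv u s ^ 2 + deriv v s ^ 2 = 1)
    (hv0 : deriv v 0 = 0) (hv2L : deriv v (2 * L) = 0)
    (hEL : ∀ s ∈ Set.Icc (0:ℝ) (2 * L),
        2 + deriv (deriv fun t =>
            ((deriv u t * deriv (deriv v) t - deriv v t * deriv (deriv u) t) ^ 2)⁻¹) s = lam) :
    3 * x0 < L ∧ lam = 2 * L / (L + x0) ∧
    ∀ s ∈ Set.Icc (0:ℝ) (2 * L), u s = xc x0 L s ∧ v s = yc x0 L s := by
  obtain ⟨A, hcurve⟩ := hadm.isQuadraticRadiusCurve hx0.le hL hsym harc hv0 hEL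
  obtain ⟨hlt, hform⟩ := hcurve.closedForm hx0 hL
  refine ⟨hlt, ?_, fun s hs => by simpa using hform s hs⟩
  have hcoeff := hcurve.coeff_eq hx0 hL
  have hcompl : L / (L + x0) = 1 - x0 / (L + x0) := by field_simp; ring
  linear_combination -2 * hcoeff - 2 * hcompl
end

section
/- For every x₀ > 0 and L > 3x₀, the enclosed area of the critical configuration strictly exceeds half its total inverse curvature: πκ²σ²/(2(π²−σ²)) + πκ²σ(π²+σ²)·sin(2σ)/(4(π²−σ²)²) > (1/2)·κ²σ(2σ + sin(2σ))/(2π). Equivalently, writing λ = 2L/(L+x₀), the enclosed area equals (1/λ)·((2(π²−σ²)σ + (π²+σ²)sin(2σ))/(2(π²−σ²)σ + (π²−σ²)sin(2σ))) times the total inverse curvature, and this factor times 1/λ is strictly greater than 1/2. -/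
open Real Set

/-- area enclosed by the critical configuration -/
noncomputable def areaVal (x0 L : ℝ) : ℝ :=
  π * kap x0 L ^ 2 * sig x0 L ^ 2 / (2 * (π ^ 2 - sig x0 L ^ 2)) +
    π * kap x0 L ^ 2 * sig x0 L * (π ^ 2 + sig x0 L ^ 2) * Real.sin (2 * sig x0 L) /
      (4 * (π ^ 2 - sig x0 L ^ 2) ^ 2)

/-- total inverse curvature of the critical configuration -/
noncomputable def ticVal (x0 L : ℝ) : ℝ :=
  kap x0 L ^ 2 * sig x0 L * (2 * sig x0 L + Real.sin (2 * sig x0 L)) / (2 * π)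

/-- the ratio factor relating area and total inverse curvature -/
noncomputable def factorVal (x0 L : ℝ) : ℝ :=
  (2 * (π ^ 2 - sig x0 L ^ 2) * sig x0 L + (π ^ 2 + sig x0 L ^ 2) * Real.sin (2 * sig x0 L)) /
    (2 * (π ^ 2 - sig x0 L ^ 2) * sig x0 L + (π ^ 2 - sig x0 L ^ 2) * Real.sin (2 * sig x0 L))

/-!
Since `σ² = π² x₀ / (L + x₀)`, the parameter `λ = 2L / (L + x₀)` equals `2 (π² - σ²) / π²`, and with
this value the area identity is rational algebra in `σ`, `κ` and `sin 2σ`. For the inequality,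
`λ < 2` already gives `1 / λ > 1 / 2`, while `3 x₀ ≤ L` means `σ ≤ π / 2`, so `sin 2σ ≥ 0` and the
factor `1 + 2σ² sin 2σ / ((π² - σ²) (2σ + sin 2σ))` is at least `1`.
-/

lemma add_sin_pos {x : ℝ} (hx : 0 < x) : 0 < x + sin x := by
  have abs_sin_lt : |sin x| < x := by simpa only [abs_of_pos hx] using abs_sin_lt_abs hx.ne'
  linarith [neg_lt_of_abs_lt abs_sin_lt]

section

variable {x0 L : ℝ}

lemma sig_sq (hx0 : 0 ≤ x0) (hL : 0 ≤ L) : sig x0 L ^ 2 = π ^ 2 * (x0 / (L + x0)) := by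
  rw [sig, mul_pow, sq_sqrt (by positivity)]

lemma sig_pos (hx0 : 0 < x0) (hL : 0 ≤ L) : 0 < sig x0 L := by
  unfold sig
  positivity

lemma pi_sq_sub_sig_sq (hx0 : 0 ≤ x0) (hL : 0 < L) :
    π ^ 2 - sig x0 L ^ 2 = π ^ 2 * (L / (L + x0)) := by
  have : L + x0 ≠ 0 := by positivity
  rw [sig_sq hx0 hL.le]
  field_simp
  ring

lemma pi_sq_sub_sig_sq_pos (hx0 : 0 ≤ x0) (hL : 0 < L) : 0 < π ^ 2 - sig x0 L ^ 2 := by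
  rw [pi_sq_sub_sig_sq hx0 hL]
  positivity

lemma sig_lt_pi (hx0 : 0 ≤ x0) (hL : 0 < L) : sig x0 L < π :=
  lt_of_pow_lt_pow_left₀ 2 pi_pos.le (sub_pos.1 (pi_sq_sub_sig_sq_pos hx0 hL))

lemma sig_le_pi_div_two (hx0 : 0 < x0) (hL : 3 * x0 ≤ L) : sig x0 L ≤ π / 2 := by
  have L_pos : 0 < L := by linarith
  have ratio_le : x0 / (L + x0) ≤ 1 / 4 := by
    rw [div_le_div_iff₀ (by positivity) (by norm_num)]
    linarith
  refine le_of_sq_le_sq ?_ (by positivity)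
  calc sig x0 L ^ 2 = π ^ 2 * (x0 / (L + x0)) := sig_sq hx0.le L_pos.le
    _ ≤ π ^ 2 * (1 / 4) := by gcongr
    _ = (π / 2) ^ 2 := by ring

lemma two_mul_sig_add_sin_pos (hx0 : 0 < x0) (hL : 0 ≤ L) :
    0 < 2 * sig x0 L + sin (2 * sig x0 L) :=
  add_sin_pos (mul_pos two_pos (sig_pos hx0 hL))

lemma sin_two_mul_sig_nonneg (hx0 : 0 < x0) (hL : 3 * x0 ≤ L) : 0 ≤ sin (2 * sig x0 L) := by
  have sig_nonneg := (sig_pos hx0 (by linarith : 0 ≤ L)).le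
  have sig_le := sig_le_pi_div_two hx0 hL
  exact sin_nonneg_of_nonneg_of_le_pi (by linarith) (by linarith)

lemma kap_pos (hx0 : 0 < x0) (hL : 0 < L) : 0 < kap x0 L :=
  div_pos hL <| sin_pos_of_pos_of_lt_pi (sig_pos hx0 hL.le) (sig_lt_pi hx0.le hL)

lemma ticVal_pos (hx0 : 0 < x0) (hL : 0 < L) : 0 < ticVal x0 L := by
  have := kap_pos hx0 hL
  have := sig_pos hx0 hL.le
  have := two_mul_sig_add_sin_pos hx0 hL.le
  unfold ticVal
  positivity

lemma two_mul_div_add_eq (hx0 : 0 ≤ x0) (hL : 0 < L) :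
    2 * L / (L + x0) = 2 * (π ^ 2 - sig x0 L ^ 2) / π ^ 2 := by
  rw [pi_sq_sub_sig_sq hx0 hL]
  field_simp

lemma factorVal_eq_one_add (hx0 : 0 < x0) (hL : 0 < L) :
    factorVal x0 L = 1 + 2 * sig x0 L ^ 2 * sin (2 * sig x0 L) /
      ((π ^ 2 - sig x0 L ^ 2) * (2 * sig x0 L + sin (2 * sig x0 L))) := by
  have denom_ne_zero := (mul_pos (pi_sq_sub_sig_sq_pos hx0.le hL)
    (two_mul_sig_add_sin_pos hx0 hL.le)).ne'
  rw [factorVal, mul_right_comm, mul_comm _ (π ^ 2 - sig x0 L ^ 2), ← mul_add,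
    one_add_div denom_ne_zero]
  ring

lemma one_le_factorVal (hx0 : 0 < x0) (hL : 3 * x0 ≤ L) : 1 ≤ factorVal x0 L := by
  have L_pos : 0 < L := by linarith
  have := sin_two_mul_sig_nonneg hx0 hL
  have := pi_sq_sub_sig_sq_pos hx0.le L_pos
  have := two_mul_sig_add_sin_pos hx0 L_pos.le
  rw [factorVal_eq_one_add hx0 L_pos]
  exact le_add_of_nonneg_right (by positivity)

lemma areaVal_eq_mul_ticVal (hx0 : 0 < x0) (hL : 0 < L) :
    areaVal x0 L = 1 / (2 * L / (L + x0)) * factorVal x0 L * ticVal x0 L := by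
  have gap_ne_zero := (pi_sq_sub_sig_sq_pos hx0.le hL).ne'
  have sum_ne_zero := (two_mul_sig_add_sin_pos hx0 hL.le).ne'
  have factor_mul_sum : factorVal x0 L * (2 * sig x0 L + sin (2 * sig x0 L)) =
      2 * sig x0 L + sin (2 * sig x0 L) +
        2 * sig x0 L ^ 2 * sin (2 * sig x0 L) / (π ^ 2 - sig x0 L ^ 2) := by
    rw [factorVal_eq_one_add hx0 hL, add_mul, one_mul, ← div_div, div_mul_cancel₀ _ sum_ne_zero]
  calc areaVal x0 L
      = π * kap x0 L ^ 2 * sig x0 L / (4 * (π ^ 2 - sig x0 L ^ 2)) *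
          (factorVal x0 L * (2 * sig x0 L + sin (2 * sig x0 L))) := by
        rw [factor_mul_sum, areaVal]
        field_simp
        ring
    _ = 1 / (2 * L / (L + x0)) * factorVal x0 L * ticVal x0 L := by
        rw [two_mul_div_add_eq hx0.le hL, ticVal]
        field_simp
        ring

lemma half_lt_one_div_two_mul_div_add (hx0 : 0 < x0) (hL : 0 < L) :
    1 / 2 < 1 / (2 * L / (L + x0)) := by
  rw [one_div_div, div_lt_div_iff₀ two_pos (by positivity)]
  linarith

lemma half_lt_mul_factorVal (hx0 : 0 < x0) (hL : 3 * x0 ≤ L) :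
    1 / 2 < 1 / (2 * L / (L + x0)) * factorVal x0 L := by
  have L_pos : 0 < L := by linarith
  exact (half_lt_one_div_two_mul_div_add hx0 L_pos).trans_le <|
    le_mul_of_one_le_right (by positivity) (one_le_factorVal hx0 hL)

end

/-- the enclosed area of the critical configuration strictly exceeds half of its
total inverse curvature; equivalently, area `= (1/λ)·factor·`(total inverse curvature) with
`(1/λ)·factor > 1/2`, where `λ = 2L/(L+x₀)`. -/
theorem statement5 (x0 L : ℝ) (hx0 : 0 < x0) (hL : 3 * x0 < L) :
    1 / 2 * ticVal x0 L < areaVal x0 L ∧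
    areaVal x0 L = 1 / (2 * L / (L + x0)) * factorVal x0 L * ticVal x0 L ∧
    1 / 2 < 1 / (2 * L / (L + x0)) * factorVal x0 L := by
  have L_pos : 0 < L := by linarith
  have area_eq := areaVal_eq_mul_ticVal hx0 L_pos
  have half_lt := half_lt_mul_factorVal hx0 hL.le
  refine ⟨?_, area_eq, half_lt⟩
  rw [area_eq]
  exact mul_lt_mul_of_pos_right half_lt (ticVal_pos hx0 L_pos)
end

section
/- Let ȳ > 0 and let f, g ∈ C²([0,ȳ], ℝ) satisfy f''(y) > 0 and g''(y) < 0 for all y ∈ [0,ȳ]. Then ∫₀^{ȳ} (4/(f''(y)−g''(y)))·(1 + ((f'(y)−g'(y))/2)²)² dy ≤ ∫₀^{ȳ} ((1+f'(y)²)²/f''(y) + (1+g'(y)²)²/(−g''(y))) dy, with equality if and only if f'(y) = −g'(y) and f''(y) = −g''(y) for every y ∈ [0,ȳ]. -/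
open Real Set

/-! The inverse curvature of a graph with slope `s` and second derivative `c > 0`, integrated
against arc length, has density `(1 + s²)² / c`. As a function of `(s, c)` this is strictly convex:
`(A, c) ↦ A² / c` is convex on the half-plane `c > 0`, it is increasing in `A ≥ 0`, and
`A = 1 + s²` is strictly convex. Steiner symmetrization replaces the pairs `(f', f'')` and
`(-g', -g'')` by their midpoint, so the inequality and its equality case are the pointwise strict
Jensen inequality, integrated. -/

section StrictConvexity

lemma combo_sq_div_sub_combo_sq_div_combo {K : Type*} [Field K] {a b c d A B : K}
    (hc : c ≠ 0) (hd : d ≠ 0) (hcd : a * c + b * d ≠ 0) :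
    a * (A ^ 2 / c) + b * (B ^ 2 / d) - (a * A + b * B) ^ 2 / (a * c + b * d) =
      a * b * (A * d - B * c) ^ 2 / (c * d * (a * c + b * d)) := by
  field_simp
  ring

variable {K : Type*} [Field K] [LinearOrder K] [IsStrictOrderedRing K] {a b c d A B : K}

lemma combo_sq_div_combo_le (ha : 0 < a) (hb : 0 < b) (hc : 0 < c) (hd : 0 < d) :
    (a * A + b * B) ^ 2 / (a * c + b * d) ≤ a * (A ^ 2 / c) + b * (B ^ 2 / d) := by
  rw [← sub_nonneg, combo_sq_div_sub_combo_sq_div_combo hc.ne' hd.ne' (by positivity)]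
  positivity

lemma combo_sq_div_combo_lt (ha : 0 < a) (hb : 0 < b) (hc : 0 < c) (hd : 0 < d)
    (hne : A * d ≠ B * c) :
    (a * A + b * B) ^ 2 / (a * c + b * d) < a * (A ^ 2 / c) + b * (B ^ 2 / d) := by
  have hdefect : 0 < (A * d - B * c) ^ 2 := sq_pos_of_ne_zero (sub_ne_zero.2 hne)
  rw [← sub_pos, combo_sq_div_sub_combo_sq_div_combo hc.ne' hd.ne' (by positivity)]
  exact div_pos (mul_pos (mul_pos ha hb) hdefect) (by positivity)

lemma strictConvexOn_sq_div {E : Type*} [AddCommGroup E] [Module K E] {S : Set E} {φ : E → K}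
    (hφ : StrictConvexOn K S φ) (hpos : ∀ x ∈ S, 0 < φ x) :
    StrictConvexOn K (S ×ˢ Ioi (0 : K)) fun z => φ z.1 ^ 2 / z.2 := by
  refine ⟨hφ.1.prod (convex_Ioi 0), ?_⟩
  rintro ⟨s, c⟩ ⟨hs, hc : 0 < c⟩ ⟨t, d⟩ ⟨ht, hd : 0 < d⟩ hne a b ha hb hab
  simp only [Prod.smul_mk, Prod.mk_add_mk, smul_eq_mul]
  by_cases hst : s = t
  · subst hst
    have hcd : d ≠ c := fun h => hne (by rw [h])
    have hφs : φ s * d ≠ φ s * c := (mul_right_injective₀ (hpos s hs).ne').ne hcd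
    simpa only [← add_smul, ← add_mul, hab, one_smul, one_mul] using
      combo_sq_div_combo_lt ha hb hc hd hφs
  · have hφst : φ (a • s + b • t) < a * φ s + b * φ t := hφ.2 hs ht hst ha hb hab
    have hφ_pos : 0 < φ (a • s + b • t) := hpos _ (hφ.1 hs ht ha.le hb.le hab)
    calc φ (a • s + b • t) ^ 2 / (a * c + b * d)
        < (a * φ s + b * φ t) ^ 2 / (a * c + b * d) := by gcongr
      _ ≤ a * (φ s ^ 2 / c) + b * (φ t ^ 2 / d) := combo_sq_div_combo_le ha hb hc hd

end StrictConvexity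

section InverseCurvature

/-- The density `κ⁻¹ ds / dy` of the inverse curvature of a graph `x = f(y)`, as a function of
`z = (f'(y), f''(y))`: here `κ = f'' / (1 + f'²)^(3/2)` and `ds = (1 + f'²)^(1/2) dy`. -/
noncomputable def inverseCurvatureDensity (z : ℝ × ℝ) : ℝ :=
  (1 + z.1 ^ 2) ^ 2 / z.2

lemma strictConvexOn_inverseCurvatureDensity :
    StrictConvexOn ℝ (univ ×ˢ Ioi 0) inverseCurvatureDensity :=
  have hconv : StrictConvexOn ℝ univ fun s : ℝ => 1 + s ^ 2 :=
    (convexOn_const 1 convex_univ).add_strictConvexOn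
      (even_two.strictConvexOn_pow two_ne_zero)
  strictConvexOn_sq_div hconv fun _ _ => by positivity

lemma continuousOn_inverseCurvatureDensity :
    ContinuousOn inverseCurvatureDensity (univ ×ˢ Ioi 0) :=
  ContinuousOn.div (by fun_prop) continuousOn_snd fun _ hz => (mem_Ioi.1 hz.2).ne'

lemma two_mul_inverseCurvatureDensity_midpoint (s t c d : ℝ) :
    2 * inverseCurvatureDensity (midpoint ℝ (s, c) (-t, -d)) =
      4 / (c - d) * (1 + ((s - t) / 2) ^ 2) ^ 2 := by
  simp only [inverseCurvatureDensity, midpoint_eq_smul_add, Prod.mk_add_mk, Prod.smul_mk,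
    smul_eq_mul, invOf_eq_inv, ← sub_eq_add_neg, inv_mul_eq_div, div_div_eq_mul_div]
  ring

end InverseCurvature

section IntegratedJensen

lemma two_mul_map_midpoint_lt_of_strictConvexOn {E : Type*} [AddCommGroup E] [Module ℝ E]
    {S : Set E} {F : E → ℝ} (hF : StrictConvexOn ℝ S F) {x y : E} (hx : x ∈ S) (hy : y ∈ S)
    (hne : x ≠ y) : 2 * F (midpoint ℝ x y) < F x + F y := by
  have hlt := hF.2 hx hy hne one_half_pos one_half_pos (add_halves 1)
  rw [← smul_add, ← smul_add, one_div, ← invOf_eq_inv, ← midpoint_eq_smul_add, invOf_eq_inv,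
    smul_eq_mul] at hlt
  linarith

lemma integral_eq_iff_eqOn_of_le {a b : ℝ} (hab : a < b) {u v : ℝ → ℝ}
    (hu : ContinuousOn u (Icc a b)) (hv : ContinuousOn v (Icc a b))
    (hle : ∀ y ∈ Icc a b, u y ≤ v y) :
    ∫ y in a..b, u y = ∫ y in a..b, v y ↔ EqOn u v (Icc a b) := by
  refine ⟨fun heq y hy => (hle y hy).eq_of_not_lt fun hlt => heq.not_lt ?_, fun heq => ?_⟩
  · exact intervalIntegral.integral_lt_integral_of_continuousOn_of_le_of_exists_lt hab hu hv
      (fun x hx => hle x (Ioc_subset_Icc_self hx)) ⟨y, hy, hlt⟩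
  · exact intervalIntegral.integral_congr (by rwa [uIcc_of_le hab.le])

theorem integral_midpoint_le_and_eq_iff_of_strictConvexOn {E : Type*} [NormedAddCommGroup E]
    [NormedSpace ℝ E] {S : Set E} {F : E → ℝ} (hF : StrictConvexOn ℝ S F)
    (hFc : ContinuousOn F S) {a b : ℝ} (hab : a < b) {u v : ℝ → E}
    (hu : ContinuousOn u (Icc a b)) (hv : ContinuousOn v (Icc a b))
    (huS : MapsTo u (Icc a b) S) (hvS : MapsTo v (Icc a b) S) :
    (∫ y in a..b, 2 * F (midpoint ℝ (u y) (v y))) ≤ (∫ y in a..b, (F (u y) + F (v y))) ∧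
      ((∫ y in a..b, 2 * F (midpoint ℝ (u y) (v y))) = (∫ y in a..b, (F (u y) + F (v y))) ↔
        EqOn u v (Icc a b)) := by
  have hmid : ContinuousOn (fun y => 2 * F (midpoint ℝ (u y) (v y))) (Icc a b) := by
    refine continuousOn_const.mul (hFc.comp ?_ fun y hy => hF.1.midpoint_mem (huS hy) (hvS hy))
    simp only [midpoint_eq_smul_add]
    fun_prop
  have hsum : ContinuousOn (fun y => F (u y) + F (v y)) (Icc a b) :=
    (hFc.comp hu huS).add (hFc.comp hv hvS)
  have hlt : ∀ y ∈ Icc a b, u y ≠ v y → 2 * F (midpoint ℝ (u y) (v y)) < F (u y) + F (v y) :=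
    fun y hy => two_mul_map_midpoint_lt_of_strictConvexOn hF (huS hy) (hvS hy)
  have heq : ∀ y, u y = v y → 2 * F (midpoint ℝ (u y) (v y)) = F (u y) + F (v y) := fun y h => by
    rw [h, midpoint_self, two_mul]
  have hle : ∀ y ∈ Icc a b, 2 * F (midpoint ℝ (u y) (v y)) ≤ F (u y) + F (v y) := fun y hy =>
    (eq_or_ne (u y) (v y)).elim (fun h => (heq y h).le) fun h => (hlt y hy h).le
  refine ⟨intervalIntegral.integral_mono_on hab.le (hmid.intervalIntegrable_of_Icc hab.le)
    (hsum.intervalIntegrable_of_Icc hab.le) hle, ?_⟩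
  rw [integral_eq_iff_eqOn_of_le hab hmid hsum hle]
  exact ⟨fun h y hy => of_not_not fun hne => (hlt y hy hne).ne (h hy), fun h y hy => heq y (h hy)⟩

end IntegratedJensen

lemma contDiffOn_of_hasDerivWithinAt {𝕜 E : Type*} [NontriviallyNormedField 𝕜]
    [NormedAddCommGroup E] [NormedSpace 𝕜 E] {n m : WithTop ℕ∞} {s : Set 𝕜} {f f' : 𝕜 → E}
    (hs : UniqueDiffOn 𝕜 s) (hf : ContDiffOn 𝕜 n f s) (hmn : m + 1 ≤ n)
    (hf' : ∀ y ∈ s, HasDerivWithinAt f (f' y) s y) : ContDiffOn 𝕜 m f' s :=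
  (hf.derivWithin hs hmn).congr fun y hy => ((hf' y hy).derivWithin (hs y hy)).symm

lemma continuousOn_prodMk_derivs {𝕜 E : Type*} [NontriviallyNormedField 𝕜]
    [NormedAddCommGroup E] [NormedSpace 𝕜 E] {s : Set 𝕜} {f f' f'' : 𝕜 → E}
    (hs : UniqueDiffOn 𝕜 s) (hf : ContDiffOn 𝕜 2 f s)
    (hf' : ∀ y ∈ s, HasDerivWithinAt f (f' y) s y)
    (hf'' : ∀ y ∈ s, HasDerivWithinAt f' (f'' y) s y) :
    ContinuousOn (fun y => (f' y, f'' y)) s :=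
  have hf'_contDiff : ContDiffOn 𝕜 1 f' s :=
    contDiffOn_of_hasDerivWithinAt hs hf one_add_one_eq_two.le hf'
  have hf''_contDiff : ContDiffOn 𝕜 0 f'' s :=
    contDiffOn_of_hasDerivWithinAt hs hf'_contDiff (zero_add 1).le hf''
  hf'_contDiff.continuousOn.prodMk hf''_contDiff.continuousOn

theorem statement8_general {a b : ℝ} (hab : a < b) {f f' f'' g g' g'' : ℝ → ℝ}
    (hf : ContDiffOn ℝ 2 f (Icc a b)) (hg : ContDiffOn ℝ 2 g (Icc a b))
    (hf' : ∀ y ∈ Icc a b, HasDerivWithinAt f (f' y) (Icc a b) y)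
    (hf'' : ∀ y ∈ Icc a b, HasDerivWithinAt f' (f'' y) (Icc a b) y)
    (hg' : ∀ y ∈ Icc a b, HasDerivWithinAt g (g' y) (Icc a b) y)
    (hg'' : ∀ y ∈ Icc a b, HasDerivWithinAt g' (g'' y) (Icc a b) y)
    (hf_pos : ∀ y ∈ Icc a b, 0 < f'' y) (hg_neg : ∀ y ∈ Icc a b, g'' y < 0) :
    (∫ y in a..b, 4 / (f'' y - g'' y) * (1 + ((f' y - g' y) / 2) ^ 2) ^ 2) ≤
      (∫ y in a..b, ((1 + f' y ^ 2) ^ 2 / f'' y + (1 + g' y ^ 2) ^ 2 / (-g'' y))) ∧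
    ((∫ y in a..b, 4 / (f'' y - g'' y) * (1 + ((f' y - g' y) / 2) ^ 2) ^ 2) =
      (∫ y in a..b, ((1 + f' y ^ 2) ^ 2 / f'' y + (1 + g' y ^ 2) ^ 2 / (-g'' y))) ↔
      ∀ y ∈ Icc a b, f' y = -g' y ∧ f'' y = -g'' y) := by
  have hu : ContinuousOn (fun y => (f' y, f'' y)) (Icc a b) :=
    continuousOn_prodMk_derivs (uniqueDiffOn_Icc hab) hf hf' hf''
  have hv : ContinuousOn (fun y => (-g' y, -g'' y)) (Icc a b) :=
    (continuousOn_prodMk_derivs (uniqueDiffOn_Icc hab) hg hg' hg'').neg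
  have hjensen := integral_midpoint_le_and_eq_iff_of_strictConvexOn
    strictConvexOn_inverseCurvatureDensity continuousOn_inverseCurvatureDensity hab hu hv
    (fun y hy => ⟨mem_univ _, hf_pos y hy⟩) fun y hy => ⟨mem_univ _, neg_pos.2 (hg_neg y hy)⟩
  simp only [two_mul_inverseCurvatureDensity_midpoint] at hjensen
  simpa only [inverseCurvatureDensity, neg_sq, EqOn, Prod.mk.injEq] using hjensen

/-- the Steiner-symmetrization inequality for the total inverse curvature, with
equality if and only if the region is already symmetric (`f' = −g'`, `f'' = −g''`). -/
theorem statement8 (ybar : ℝ) (hybar : 0 < ybar) (f g : ℝ → ℝ)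
    (hf : ContDiff ℝ 2 f) (hg : ContDiff ℝ 2 g)
    (hf'' : ∀ y ∈ Set.Icc (0:ℝ) ybar, 0 < deriv (deriv f) y)
    (hg'' : ∀ y ∈ Set.Icc (0:ℝ) ybar, deriv (deriv g) y < 0) :
    (∫ y in (0:ℝ)..ybar,
        4 / (deriv (deriv f) y - deriv (deriv g) y) *
          (1 + ((deriv f y - deriv g y) / 2) ^ 2) ^ 2) ≤
      (∫ y in (0:ℝ)..ybar,
        ((1 + deriv f y ^ 2) ^ 2 / deriv (deriv f) y +
          (1 + deriv g y ^ 2) ^ 2 / (-deriv (deriv g) y))) ∧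
    ((∫ y in (0:ℝ)..ybar,
        4 / (deriv (deriv f) y - deriv (deriv g) y) *
          (1 + ((deriv f y - deriv g y) / 2) ^ 2) ^ 2) =
      (∫ y in (0:ℝ)..ybar,
        ((1 + deriv f y ^ 2) ^ 2 / deriv (deriv f) y +
          (1 + deriv g y ^ 2) ^ 2 / (-deriv (deriv g) y))) ↔
      ∀ y ∈ Set.Icc (0:ℝ) ybar,
        deriv f y = -deriv g y ∧ deriv (deriv f) y = -deriv (deriv g) y) :=
  statement8_general hybar hf.contDiffOn hg.contDiffOn
    (fun y _ => (hf.differentiable two_ne_zero y).hasDerivAt.hasDerivWithinAt)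
    (fun y _ => (hf.differentiable_deriv_two y).hasDerivAt.hasDerivWithinAt)
    (fun y _ => (hg.differentiable two_ne_zero y).hasDerivAt.hasDerivWithinAt)
    (fun y _ => (hg.differentiable_deriv_two y).hasDerivAt.hasDerivWithinAt) hf'' hg''
end
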